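/- arXiv:1409.7499 — 2 statements merged into one kernel-verified Lean document; each statement's English description precedes it below -/
import Mathlib

section
/- There exists a constant C > 0 such that for every t > 0 and every R ∈ (0,1], t ∫_0^{t/2} ∫_0^{R} exp(−2 r² (t−s)) r⁴ (1+s)^{−15/7} dr ds ≤ C t^{−3/2}. -/
lemma aux_inner (t : ℝ) (ht : 0 < t) (R : ℝ) (hR : 0 < R) :
    (∫ r in (0 : ℝ)..R, Real.exp (-t * r ^ 2) * r ^ 4) ≤
      t ^ (-(5 : ℝ) / 2) * ((1 / 2) * Real.Gamma (5 / 2)) := by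
  have h := integral_rpow_mul_exp_neg_mul_rpow (p := 2) (q := 4) (b := t) (by norm_num) (by norm_num) ht
  have hi := integrableOn_rpow_mul_exp_neg_mul_rpow (p := 2) (s := 4) (b := t) (by norm_num) (by norm_num) ht
  have e : ∀ x : ℝ, x ^ (4 : ℝ) * Real.exp (-t * x ^ (2 : ℝ)) = Real.exp (-t * x ^ 2) * x ^ 4 := by
    intro x
    rw [mul_comm]
    norm_cast
  simp only [e] at h hi
  rw [intervalIntegral.integral_of_le hR.le]
  calc _ ≤ ∫ r in Set.Ioi (0 : ℝ), Real.exp (-t * r ^ 2) * r ^ 4 := by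
        apply MeasureTheory.setIntegral_mono_set hi
        · exact Filter.Eventually.of_forall fun x => by simp only [Pi.zero_apply]; positivity
        · exact (Set.Ioc_subset_Ioi_self).eventuallyLE
    _ = _ := by
        rw [h]; norm_num [mul_assoc]

lemma aux_outer (T : ℝ) (hT : 0 < T) :
    (∫ s in (0 : ℝ)..T, (1 + s) ^ (-(15 : ℝ) / 7)) ≤ 1 := by
  rw [intervalIntegral.integral_comp_add_left (fun x : ℝ => x ^ (-(15 : ℝ) / 7)) 1,
    integral_rpow]
  · have : 0 < (1 + T) ^ (-(15 : ℝ) / 7 + 1) := by positivity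
    norm_num at this ⊢
    linarith
  · right
    refine ⟨by norm_num, ?_⟩
    rw [Set.uIcc_of_le (by linarith)]
    intro h
    have := h.1
    linarith

/-- There is a constant `C > 0` such that for every `t > 0` and every
`R ∈ (0,1]`,
`t ∫_0^{t/2} ∫_0^R exp(-2r²(t-s)) r⁴ (1+s)^{-15/7} dr ds ≤ C t^{-3/2}`. -/
theorem stmt13 :
    ∃ C : ℝ, 0 < C ∧ ∀ t : ℝ, 0 < t → ∀ R : ℝ, 0 < R → R ≤ 1 →
      t * (∫ s in (0 : ℝ)..(t / 2), ∫ r in (0 : ℝ)..R,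
          Real.exp (-2 * r ^ 2 * (t - s)) * r ^ 4 * (1 + s) ^ (-(15 : ℝ) / 7)) ≤
        C * t ^ (-(3 : ℝ) / 2) := by
  have hG : 0 < Real.Gamma (5 / 2) := Real.Gamma_pos_of_pos (by norm_num)
  refine ⟨(1 / 2) * Real.Gamma (5 / 2), by positivity, ?_⟩
  intro t ht R hR _
  set K := (1 / 2) * Real.Gamma (5 / 2) with hK
  have hKp : 0 < K := by positivity
  have hint : IntervalIntegrable (fun s : ℝ => (t ^ (-(5 : ℝ) / 2) * K) * (1 + s) ^ (-(15 : ℝ) / 7))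
      MeasureTheory.volume 0 (t / 2) := by
    apply ContinuousOn.intervalIntegrable
    rw [Set.uIcc_of_le (by linarith)]
    intro s hs
    apply ContinuousAt.continuousWithinAt
    have : 1 + s ≠ 0 := by linarith [hs.1]
    exact continuousAt_const.mul
      (ContinuousAt.rpow_const (by fun_prop) (Or.inl this))
  have hb : ∀ s ∈ Set.Ioc 0 (t / 2), ‖∫ r in (0 : ℝ)..R,
          Real.exp (-2 * r ^ 2 * (t - s)) * r ^ 4 * (1 + s) ^ (-(15 : ℝ) / 7)‖ ≤
      (t ^ (-(5 : ℝ) / 2) * K) * (1 + s) ^ (-(15 : ℝ) / 7) := by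
    intro s hs
    have hs1 : 0 < 1 + s := by linarith [hs.1]
    rw [intervalIntegral.integral_mul_const, norm_mul, Real.norm_of_nonneg (Real.rpow_nonneg hs1.le _)]
    apply mul_le_mul_of_nonneg_right _ (Real.rpow_nonneg hs1.le _)
    refine le_trans ?_ (aux_inner t ht R hR)
    apply intervalIntegral.norm_integral_le_of_norm_le hR.le
    · refine Filter.Eventually.of_forall fun r _ => ?_
      rw [Real.norm_of_nonneg (by positivity)]
      refine mul_le_mul_of_nonneg_right (Real.exp_le_exp.2 ?_) (by positivity)
      nlinarith [sq_nonneg r, hs.2, mul_nonneg (sq_nonneg r) (sub_nonneg.2 hs.2)]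
    · apply Continuous.intervalIntegrable
      fun_prop
  have hmain := intervalIntegral.norm_integral_le_of_norm_le (by linarith : (0 : ℝ) ≤ t / 2)
    (Filter.Eventually.of_forall hb) hint
  rw [intervalIntegral.integral_const_mul] at hmain
  have h2 : t * t ^ (-(5 : ℝ) / 2) = t ^ (-(3 : ℝ) / 2) := by
    rw [← Real.rpow_one_add' ht.le (by norm_num)]
    norm_num
  have hp : 0 < t ^ (-(5 : ℝ) / 2) * K := by positivity
  calc _ ≤ t * ((t ^ (-(5 : ℝ) / 2) * K) * 1) := by
        apply mul_le_mul_of_nonneg_left _ ht.le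
        refine ((le_abs_self _).trans hmain).trans ?_
        exact mul_le_mul_of_nonneg_left (aux_outer _ (by linarith)) hp.le
    _ = _ := by rw [← h2]; ring
end

section
/- Let a ≤ 0, c > 0 and b ∈ ℝ. Let Q : ℝ³ → ℝ^{3×3} be continuously differentiable such that the functions |∇Q|², |Q|², |Q|³ and |Q|⁴ are Lebesgue integrable on ℝ³, and suppose that both integral identities ∫_{ℝ³} ( (1/2)|∇Q|² + (3a/2)|Q|² + b tr(Q³) + (3c/4)|Q|⁴ ) dx = 0 and ∫_{ℝ³} ( |∇Q|² + a|Q|² + b tr(Q³) + c|Q|⁴ ) dx = 0 hold. Then Q(x) = 0 for every x ∈ ℝ³. -/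
open MeasureTheory Matrix

noncomputable section

abbrev E3 : Type := EuclideanSpace ℝ (Fin 3)
abbrev Mat : Type := Matrix (Fin 3) (Fin 3) ℝ

attribute [local instance] Matrix.normedAddCommGroup Matrix.normedSpace

/-- Frobenius inner product `A : B`. -/
def frob (A B : Mat) : ℝ := ∑ i, ∑ j, A i j * B i j
/-- Frobenius norm `|A|`. -/
def frobNorm (A : Mat) : ℝ := Real.sqrt (frob A A)
/-- partial derivative `∂ₖ f` of a scalar function on `ℝ³` -/
def pd (k : Fin 3) (f : E3 → ℝ) (x : E3) : ℝ := fderiv ℝ f x (EuclideanSpace.single k 1)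
/-- `|∇Q(x)|² = Σ_{k,i,j} (∂ₖ Q_{ij}(x))²` -/
def gradNormSq (Q : E3 → Mat) (x : E3) : ℝ := ∑ k, ∑ i, ∑ j, (pd k (fun y => Q y i j) x) ^ 2

theorem aux_frob_nonneg (A : Mat) : 0 ≤ frob A A :=
  Finset.sum_nonneg fun i _ => Finset.sum_nonneg fun j _ => mul_self_nonneg _

theorem aux_entry (A : Mat) (i j : Fin 3) : |A i j| ≤ frobNorm A := by
  unfold frobNorm
  apply Real.abs_le_sqrt
  unfold frob
  rw [sq]
  calc A i j * A i j ≤ ∑ j, A i j * A i j :=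
        Finset.single_le_sum (f := fun j => A i j * A i j) (fun j _ => mul_self_nonneg _)
          (Finset.mem_univ j)
    _ ≤ _ := Finset.single_le_sum (f := fun i => ∑ j, A i j * A i j)
          (fun i _ => Finset.sum_nonneg fun j _ => mul_self_nonneg _) (Finset.mem_univ i)

theorem aux_trace (A : Mat) :
    Matrix.trace (A ^ 3) = ∑ i, ∑ j, ∑ k, A i k * A k j * A j i := by
  simp only [pow_succ, pow_zero, one_mul, Matrix.trace, Matrix.diag, Matrix.mul_apply,
    Finset.sum_mul]

theorem aux_trace_le (A : Mat) : |Matrix.trace (A ^ 3)| ≤ 27 * frobNorm A ^ 3 := by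
  have h0 : 0 ≤ frobNorm A := Real.sqrt_nonneg _
  have key : ∀ i j k : Fin 3, |A i k * A k j * A j i| ≤ frobNorm A ^ 3 := by
    intro i j k
    rw [abs_mul, abs_mul]
    calc _ ≤ frobNorm A * frobNorm A * frobNorm A := by
          gcongr <;> exact aux_entry A _ _
      _ = _ := by ring
  rw [aux_trace]
  calc _ ≤ ∑ i : Fin 3, ∑ j : Fin 3, ∑ k : Fin 3, |A i k * A k j * A j i| := by
        refine (Finset.abs_sum_le_sum_abs _ _).trans (Finset.sum_le_sum fun i _ => ?_)
        refine (Finset.abs_sum_le_sum_abs _ _).trans (Finset.sum_le_sum fun j _ => ?_)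
        exact Finset.abs_sum_le_sum_abs _ _
    _ ≤ ∑ i : Fin 3, ∑ j : Fin 3, ∑ k : Fin 3, frobNorm A ^ 3 :=
        Finset.sum_le_sum fun i _ => Finset.sum_le_sum fun j _ => Finset.sum_le_sum fun k _ =>
          key i j k
    _ = _ := by simp; ring

/-- Let `a ≤ 0 < c`, `b ∈ ℝ`. If `Q : ℝ³ → ℝ^{3×3}` is `C¹` with
`|∇Q|², |Q|², |Q|³, |Q|⁴` integrable, and both
`∫ ( (1/2)|∇Q|² + (3a/2)|Q|² + b tr(Q³) + (3c/4)|Q|⁴ ) = 0` (Pochožaev identity) and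
`∫ ( |∇Q|² + a|Q|² + b tr(Q³) + c|Q|⁴ ) = 0` (variational identity) hold, then `Q ≡ 0`. -/
theorem stmt19 (a b c : ℝ) (ha : a ≤ 0) (hc : 0 < c)
    (Q : E3 → Mat) (hQ : ContDiff ℝ 1 Q)
    (hint1 : Integrable (fun x => gradNormSq Q x))
    (hint2 : Integrable (fun x => frobNorm (Q x) ^ 2))
    (hint3 : Integrable (fun x => frobNorm (Q x) ^ 3))
    (hint4 : Integrable (fun x => frobNorm (Q x) ^ 4))
    (hpoho : ∫ x : E3, ((1 : ℝ) / 2 * gradNormSq Q x + 3 * a / 2 * frobNorm (Q x) ^ 2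
        + b * Matrix.trace (Q x ^ 3) + 3 * c / 4 * frobNorm (Q x) ^ 4) = 0)
    (hvar : ∫ x : E3, (gradNormSq Q x + a * frobNorm (Q x) ^ 2
        + b * Matrix.trace (Q x ^ 3) + c * frobNorm (Q x) ^ 4) = 0) :
    ∀ x : E3, Q x = 0 := by
  have hcont : ∀ i j, Continuous fun x => Q x i j := fun i j =>
    (continuous_apply j).comp ((continuous_apply i).comp hQ.continuous)
  have hT : Integrable (fun x => Matrix.trace (Q x ^ 3)) := by
    refine Integrable.mono' (hint3.const_mul 27) ?_ ?_
    · apply Continuous.aestronglyMeasurable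
      simp only [aux_trace]
      fun_prop
    · filter_upwards with x
      exact aux_trace_le _
  have hN : Continuous fun x => frobNorm (Q x) := by
    unfold frobNorm frob
    fun_prop
  have hg0 : ∀ x, 0 ≤ gradNormSq Q x := fun x =>
    Finset.sum_nonneg fun _ _ => Finset.sum_nonneg fun _ _ => Finset.sum_nonneg fun _ _ =>
      sq_nonneg _
  have hI1 := (((hint1.const_mul ((1 : ℝ) / 2)).add (hint2.const_mul (3 * a / 2))).add
    (hT.const_mul b)).add (hint4.const_mul (3 * c / 4))
  have hI2 := ((hint1.add (hint2.const_mul a)).add (hT.const_mul b)).add (hint4.const_mul c)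
  have hsub := integral_sub hI2 hI1
  simp only [Pi.add_apply] at hsub
  rw [hvar, hpoho, sub_zero] at hsub
  have hle : ∫ x, c / 4 * frobNorm (Q x) ^ 4 ≤ 0 := by
    rw [← hsub]
    refine integral_mono (hint4.const_mul _) (hI2.sub hI1) fun x => ?_
    simp only [Pi.add_apply, Pi.sub_apply]
    nlinarith [hg0 x, mul_nonneg (neg_nonneg.mpr ha) (sq_nonneg (frobNorm (Q x)))]
  have hnn : ∀ x, 0 ≤ c / 4 * frobNorm (Q x) ^ 4 := fun x => by positivity
  have hz : ∫ x, c / 4 * frobNorm (Q x) ^ 4 = 0 := le_antisymm hle (integral_nonneg hnn)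
  rw [integral_eq_zero_iff_of_nonneg hnn (hint4.const_mul _)] at hz
  have hz' := (Continuous.ae_eq_iff_eq volume (by fun_prop) continuous_zero).1 hz
  intro x
  have hx := congrFun hz' x
  simp only [Pi.zero_apply] at hx
  have hx0 : frobNorm (Q x) = 0 := by
    have : frobNorm (Q x) ^ 4 = 0 := by
      rcases mul_eq_zero.1 hx with h | h
      · linarith
      · exact h
    exact pow_eq_zero_iff (by norm_num) |>.1 this
  ext i j
  have := aux_entry (Q x) i j
  rw [hx0] at this
  exact abs_nonpos_iff.1 this
end
end
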